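/- Let k ≥ 1 and D ≥ 2 be integers and let f: ℕ → ℕ. Let π: V(X) → ℕ be a combinatorial metric graph bundle over the ray with properness function f, and assume every vertex of each fiber graph F_i has degree at most D within F_i. For a subset A ⊆ F₀, let Fl_k(A) denote the union of the images of all k-qi sections σ with σ(0) ∈ A. Then, setting c = D^{f(4k)+1} > 1, for every finite subset A ⊆ F₀ and every i ∈ ℕ, the set Fl_k(A) ∩ F_i is finite and has at most |A|·cⁱ elements. -/

import Mathlib

/-- The fiber over `i` of the projection `π`. -/
def bundleFiber {V : Type*} (π : V → ℕ) (i : ℕ) : Set V := {v | π v = i}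

/-- A `k`-qi section of the bundle `π : V(X) → ℕ` over the ray. -/
def IsQISection {V : Type*} (X : SimpleGraph V) (π : V → ℕ) (k : ℝ) (σ : ℕ → V) : Prop :=
  (∀ n : ℕ, π (σ n) = n) ∧
    ∀ m n : ℕ,
      (1 / k) * |(m : ℝ) - (n : ℝ)| - k ≤ (X.dist (σ m) (σ n) : ℝ) ∧
      (X.dist (σ m) (σ n) : ℝ) ≤ k * |(m : ℝ) - (n : ℝ)| + k

/-- The `k`-flow of a subset `A` of the zero fiber: the union of the images of
all `k`-qi sections through points of `A`. -/
def flowSet {V : Type*} (X : SimpleGraph V) (π : V → ℕ) (k : ℝ) (A : Set V) : Set V :=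
  {x | ∃ σ : ℕ → V, IsQISection X π k σ ∧ σ 0 ∈ A ∧ ∃ n : ℕ, σ n = x}

/-!
Two consecutive points of a `k`-qi section are at distance at most `2k`, so the section values
in `F_{i+1}` that can follow a given point of `F_i` are pairwise at distance at most `4k` in `X`.
By properness they lie in a single ball of radius `f (4k)` of the fiber `F_{i+1}`, and the degree
bound gives such a ball at most `1 + D + ⋯ + D ^ f (4k) < D ^ (f (4k) + 1)` vertices. Hence passing
from one fiber to the next multiplies the size of the flow by at most `c = D ^ (f (4k) + 1)`.
-/

theorem encard_biUnion_le_encard_mul {α β : Type*} {s : Set α} {t : α → Set β} {c : ℕ∞}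
    (ht : ∀ a ∈ s, (t a).encard ≤ c) : (⋃ a ∈ s, t a).encard ≤ s.encard * c := by
  rcases s.finite_or_infinite with hs | hs
  · lift s to Finset α using hs
    calc (⋃ a ∈ s, t a).encard
        ≤ ∑ a ∈ s, (t a).encard := s.set_encard_biUnion_le t
      _ ≤ ∑ _a ∈ s, c := Finset.sum_le_sum ht
      _ = (s : Set α).encard * c := by
        rw [Finset.sum_const, nsmul_eq_mul, Set.encard_coe_eq_coe_finsetCard]
  · rcases eq_or_ne c 0 with rfl | hc
    · have h_empty : ⋃ a ∈ s, t a = ∅ := by simpa using ht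
      simp [h_empty]
    · simp [hs.encard_eq, ENat.top_mul hc]

section GraphBalls

variable {W : Type*} {G : SimpleGraph W}

theorem ball_add_one_subset (c : W) (r : ℕ∞) :
    G.ball c (r + 1) ⊆ insert c (⋃ z ∈ G.neighborSet c, G.ball z r) := by
  intro y hy
  rw [SimpleGraph.mem_ball, SimpleGraph.edist_comm] at hy
  obtain ⟨p, hp⟩ := SimpleGraph.exists_walk_of_edist_ne_top hy.ne_top
  cases p with
  | nil => exact Set.mem_insert _ _
  | @cons _ z _ hcz q =>
    refine Set.mem_insert_of_mem _ (Set.mem_biUnion hcz ?_)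
    rw [SimpleGraph.mem_ball, SimpleGraph.edist_comm]
    rw [← hp, SimpleGraph.Walk.length_cons, Nat.cast_add_one] at hy
    exact (SimpleGraph.edist_le q).trans_lt (lt_of_add_lt_add_right hy)

theorem encard_ball_le_geom_sum {D : ℕ∞} (hdeg : ∀ x, (G.neighborSet x).encard ≤ D)
    (c : W) (n : ℕ) : (G.ball c n).encard ≤ ∑ j ∈ Finset.range n, D ^ j := by
  induction n generalizing c with
  | zero => simp
  | succ n ih =>
    rw [Nat.cast_add_one]
    calc (G.ball c (n + 1)).encard
        ≤ (insert c (⋃ z ∈ G.neighborSet c, G.ball z n)).encard :=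
          Set.encard_le_encard (ball_add_one_subset c n)
      _ ≤ (⋃ z ∈ G.neighborSet c, G.ball z n).encard + 1 := Set.encard_insert_le _ _
      _ ≤ (G.neighborSet c).encard * ∑ j ∈ Finset.range n, D ^ j + 1 := by
          gcongr
          exact encard_biUnion_le_encard_mul fun z _ ↦ ih z
      _ ≤ D * ∑ j ∈ Finset.range n, D ^ j + 1 := by
          gcongr
          exact hdeg c
      _ = ∑ j ∈ Finset.range (n + 1), D ^ j := geom_sum_succ.symm

theorem encard_ball_le_pow {D : ℕ} (hD : 2 ≤ D) (hdeg : ∀ x, (G.neighborSet x).encard ≤ D)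
    (c : W) (n : ℕ) : (G.ball c n).encard ≤ (D ^ n : ℕ) := by
  have h_geom : ∑ j ∈ Finset.range n, D ^ j ≤ D ^ n :=
    (Nat.geomSum_lt hD fun _ ↦ Finset.mem_range.mp).le
  exact (encard_ball_le_geom_sum hdeg c n).trans (mod_cast h_geom)

end GraphBalls

section Flow

variable {V : Type*} {X : SimpleGraph V} {π : V → ℕ} {k : ℝ} {σ : ℕ → V} {A : Set V}

theorem encard_setOf_mem_dist_le_le_pow {D R : ℕ} (hD : 2 ≤ D) {r : ℝ} {S : Set V}
    (hX : X.Connected) (hS : (X.induce S).Connected)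
    (hproper : ∀ x y : S, (X.dist x y : ℝ) ≤ 2 * r → (X.induce S).dist x y ≤ R)
    (hdeg : ∀ x : S, ((X.induce S).neighborSet x).encard ≤ D) (y : V) :
    {x | x ∈ S ∧ (X.dist y x : ℝ) ≤ r}.encard ≤ (D ^ (R + 1) : ℕ) := by
  rcases Set.eq_empty_or_nonempty {x | x ∈ S ∧ (X.dist y x : ℝ) ≤ r} with h_empty | ⟨c, hcS, hyc⟩
  · simp [h_empty]
  have h_subset : {x | x ∈ S ∧ (X.dist y x : ℝ) ≤ r} ⊆
      Subtype.val '' (X.induce S).ball ⟨c, hcS⟩ (R + 1 : ℕ) := by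
    rintro x ⟨hxS, hyx⟩
    refine ⟨⟨x, hxS⟩, ?_, rfl⟩
    have h_triangle : (X.dist x c : ℝ) ≤ X.dist y x + X.dist y c := by
      rw [X.dist_comm (u := y) (v := x)]
      exact_mod_cast hX.dist_triangle
    have h_dist : (X.induce S).dist ⟨x, hxS⟩ ⟨c, hcS⟩ ≤ R := hproper _ _ (by linarith)
    rw [SimpleGraph.mem_ball, ← (hS.preconnected _ _).coe_dist_eq_edist]
    exact_mod_cast Nat.lt_succ_of_le h_dist
  calc {x | x ∈ S ∧ (X.dist y x : ℝ) ≤ r}.encard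
      ≤ (Subtype.val '' (X.induce S).ball ⟨c, hcS⟩ (R + 1 : ℕ)).encard :=
        Set.encard_le_encard h_subset
    _ ≤ ((X.induce S).ball ⟨c, hcS⟩ (R + 1 : ℕ)).encard := Set.encard_image_le _ _
    _ ≤ (D ^ (R + 1) : ℕ) := encard_ball_le_pow hD hdeg _ _

theorem IsQISection.dist_succ_le (hσ : IsQISection X π k σ) (i : ℕ) :
    (X.dist (σ i) (σ (i + 1)) : ℝ) ≤ 2 * k := by
  have h_upper := (hσ.2 i (i + 1)).2
  have h_step : |(i : ℝ) - ((i + 1 : ℕ) : ℝ)| = 1 := by simp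
  rw [h_step] at h_upper
  linarith

theorem mem_flowSet_inter_bundleFiber {i : ℕ} {x : V} :
    x ∈ flowSet X π k A ∩ bundleFiber π i ↔
      ∃ σ : ℕ → V, IsQISection X π k σ ∧ σ 0 ∈ A ∧ σ i = x := by
  constructor
  · rintro ⟨⟨σ, hσ, hσA, n, rfl⟩, hn : π (σ n) = i⟩
    exact ⟨σ, hσ, hσA, by rw [← hn, hσ.1 n]⟩
  · rintro ⟨σ, hσ, hσA, rfl⟩
    exact ⟨⟨σ, hσ, hσA, i, rfl⟩, hσ.1 i⟩

theorem flowSet_inter_bundleFiber_zero_subset :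
    flowSet X π k A ∩ bundleFiber π 0 ⊆ A := by
  intro x hx
  obtain ⟨σ, -, hσA, rfl⟩ := mem_flowSet_inter_bundleFiber.mp hx
  exact hσA

theorem flowSet_inter_bundleFiber_succ_subset (i : ℕ) :
    flowSet X π k A ∩ bundleFiber π (i + 1) ⊆
      ⋃ y ∈ flowSet X π k A ∩ bundleFiber π i,
        {x | x ∈ bundleFiber π (i + 1) ∧ (X.dist y x : ℝ) ≤ 2 * k} := by
  intro x hx
  obtain ⟨σ, hσ, hσA, rfl⟩ := mem_flowSet_inter_bundleFiber.mp hx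
  exact Set.mem_biUnion (mem_flowSet_inter_bundleFiber.mpr ⟨σ, hσ, hσA, rfl⟩)
    ⟨hx.2, hσ.dist_succ_le i⟩

end Flow

theorem stmt8_general {V : Type*} {X : SimpleGraph V} {π : V → ℕ} {k : ℝ} {D R : ℕ} (hD : 2 ≤ D)
    (hconn : X.Connected) (hfconn : ∀ i : ℕ, (X.induce (bundleFiber π i)).Connected)
    (hproper : ∀ (i : ℕ) (x y : bundleFiber π i),
      (X.dist (x : V) (y : V) : ℝ) ≤ 4 * k → (X.induce (bundleFiber π i)).dist x y ≤ R)
    (hdeg : ∀ (i : ℕ) (x : bundleFiber π i),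
      ((X.induce (bundleFiber π i)).neighborSet x).encard ≤ D) (A : Set V) (i : ℕ) :
    (flowSet X π k A ∩ bundleFiber π i).encard ≤ A.encard * ((D ^ (R + 1)) ^ i : ℕ) := by
  induction i with
  | zero => simpa using Set.encard_le_encard flowSet_inter_bundleFiber_zero_subset
  | succ i ih =>
    have h_next (y : V) : {x | x ∈ bundleFiber π (i + 1) ∧ (X.dist y x : ℝ) ≤ 2 * k}.encard ≤
        (D ^ (R + 1) : ℕ) :=
      encard_setOf_mem_dist_le_le_pow hD hconn (hfconn _)
        (fun x z hxz ↦ hproper _ x z (by linarith)) (hdeg _) y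
    calc (flowSet X π k A ∩ bundleFiber π (i + 1)).encard
        ≤ _ := Set.encard_le_encard (flowSet_inter_bundleFiber_succ_subset i)
      _ ≤ (flowSet X π k A ∩ bundleFiber π i).encard * (D ^ (R + 1) : ℕ) :=
          encard_biUnion_le_encard_mul fun y _ ↦ h_next y
      _ ≤ A.encard * ((D ^ (R + 1)) ^ i : ℕ) * (D ^ (R + 1) : ℕ) := by gcongr
      _ = A.encard * ((D ^ (R + 1)) ^ (i + 1) : ℕ) := by
          rw [mul_assoc, ← Nat.cast_mul, ← pow_succ]

/-- In a combinatorial metric graph bundle over the ray with properness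
function `f` and fiberwise vertex degrees bounded by `D`, the `k`-flow of a
finite subset `A ⊆ F₀` meets the fiber `F_i` in at most `|A|·cⁱ` vertices,
where `c = D^(f(4k)+1)`. -/
theorem stmt8 {V : Type*} (k D : ℕ) (hk : 1 ≤ k) (hD : 2 ≤ D) (f : ℕ → ℕ)
    (X : SimpleGraph V) (π : V → ℕ)
    (hconn : X.Connected) (hsurj : Function.Surjective π)
    (hlip : ∀ u v : V, X.Adj u v → π u ≤ π v + 1 ∧ π v ≤ π u + 1)
    (hfconn : ∀ i : ℕ, (X.induce (bundleFiber π i)).Connected)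
    (hproper : ∀ (i r : ℕ), ∀ x y : bundleFiber π i,
        X.dist (x : V) (y : V) ≤ r → (X.induce (bundleFiber π i)).dist x y ≤ f r)
    (hup : ∀ v : V, ∃ w : V, π w = π v + 1 ∧ X.Adj v w)
    (hdown : ∀ v : V, 1 ≤ π v → ∃ w : V, π w + 1 = π v ∧ X.Adj v w)
    (hdeg : ∀ (i : ℕ), ∀ x : bundleFiber π i,
        ((X.induce (bundleFiber π i)).neighborSet x).Finite ∧
        ((X.induce (bundleFiber π i)).neighborSet x).ncard ≤ D) :
    ∀ A : Set V, A ⊆ bundleFiber π 0 → A.Finite →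
      ∀ i : ℕ, (flowSet X π (k : ℝ) A ∩ bundleFiber π i).Finite ∧
        (flowSet X π (k : ℝ) A ∩ bundleFiber π i).ncard ≤
          A.ncard * (D ^ (f (4 * k) + 1)) ^ i := by
  intro A _ hA i
  rw [← Set.encard_le_coe_iff_finite_ncard_le, Nat.cast_mul, hA.cast_ncard_eq]
  exact stmt8_general hD hconn hfconn (fun i x y hxy ↦ hproper i _ x y (mod_cast hxy))
    (fun i x ↦ Set.encard_le_coe_iff_finite_ncard_le.mpr (hdeg i x)) A i
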